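/- arXiv:1907.01832 — 2 statements merged into one kernel-verified Lean document; each statement's English description precedes it below -/
import Mathlib

section
/- For t > 0, the function t ↦ e^{-2t} I₀(2t) t^{s-1} (for a complex parameter s) is integrable on (0, ∞) if and only if 0 < Re(s) < 1/2. -/
open MeasureTheory Real

/-- The modified Bessel function of the first kind of order 0,
`I₀(z) = ∑_{m=0}^∞ (z/2)^{2m} / (m!)²`. -/
noncomputable def besselI0 (z : ℝ) : ℝ :=
  ∑' m : ℕ, (z / 2) ^ (2 * m) / (Nat.factorial m) ^ 2

/-!
The Mellin transform of a function comparable to `t ^ (-b)` at `0` and to `t ^ (-a)` at `∞`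
converges exactly in the strip `b < Re s < a`. For `e ^ (-z) I₀(z)` we have `b = 0`, because `I₀` is
continuous with `I₀(0) = 1`, and `a = 1 / 2`, by Laplace's method in the integral representation
`π I₀(z) = ∫ cosh (z cos θ)` over `|θ| ≤ π / 2`: since `cos θ ≤ 1 - 2 θ² / π²`, a Gaussian of width
`z ^ (-1 / 2)` dominates `e ^ (-z) cosh (z cos θ)`, and since `1 - θ² / 2 ≤ cos θ`, the latter is
bounded below for `|θ| ≤ z ^ (-1 / 2)`.
-/

open Asymptotics Filter Set
open scoped Nat Topology

section Mellin

lemma integrableAtFilter_rpow_nhdsGT_zero_iff {r : ℝ} :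
    IntegrableAtFilter (fun t : ℝ => t ^ r) (𝓝[>] 0) ↔ -1 < r := by
  refine ⟨fun ⟨u, hu, hint⟩ => ?_, fun h => ⟨Ioo 0 1, Ioo_mem_nhdsGT one_pos,
    (intervalIntegral.integrableOn_Ioo_rpow_iff one_pos).2 h⟩⟩
  obtain ⟨c, hc, hcu⟩ := mem_nhdsGT_iff_exists_Ioo_subset.1 hu
  exact (intervalIntegral.integrableOn_Ioo_rpow_iff hc).1 (hint.mono_set hcu)

variable {E : Type*} [NormedAddCommGroup E] [NormedSpace ℂ E] {f : ℝ → E} {s : ℂ}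
  {a b : ℝ} {l : Filter ℝ}

lemma isBigO_rpow_cpow_smul (hl : ∀ᶠ t in l, 0 < t) (hf : (· ^ (-a)) =O[l] f) :
    (fun t : ℝ => t ^ (s.re - 1 - a)) =O[l] fun t : ℝ => (t : ℂ) ^ (s - 1) • f t := by
  have hpow : (fun t : ℝ => t ^ (s.re - 1)) =O[l] fun t : ℝ => (t : ℂ) ^ (s - 1) :=
    .of_bound' <| hl.mono fun t ht => by
      simp [Complex.norm_cpow_eq_rpow_re_of_pos ht, abs_rpow_of_nonneg ht.le, abs_of_pos ht]
  refine (hpow.smul hf).congr' (hl.mono fun t ht => ?_) .rfl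
  simp only [smul_eq_mul, ← rpow_add ht, ← sub_eq_add_neg]

lemma re_lt_of_mellinConvergent_of_rpow_isBigO (h : MellinConvergent f s)
    (hf : (· ^ (-a)) =O[atTop] f) : s.re < a := by
  have hint : IntegrableAtFilter (fun t : ℝ => t ^ (s.re - 1 - a)) atTop :=
    (isBigO_rpow_cpow_smul (eventually_gt_atTop 0) hf).integrableAtFilter
      (by fun_prop : Measurable _).stronglyMeasurable.stronglyMeasurableAtFilter
      ⟨_, Ioi_mem_atTop 0, h⟩
  linarith [integrableAtFilter_rpow_atTop_iff.1 hint]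

lemma lt_re_of_mellinConvergent_of_rpow_isBigO (h : MellinConvergent f s)
    (hf : (· ^ (-b)) =O[𝓝[>] 0] f) : b < s.re := by
  have hpos : ∀ᶠ t : ℝ in 𝓝[>] 0, 0 < t := eventually_mem_nhdsWithin
  have hint : IntegrableAtFilter (fun t : ℝ => t ^ (s.re - 1 - b)) (𝓝[>] 0) :=
    (isBigO_rpow_cpow_smul hpos hf).integrableAtFilter
      (by fun_prop : Measurable _).stronglyMeasurable.stronglyMeasurableAtFilter
      ⟨_, self_mem_nhdsWithin, h⟩
  linarith [integrableAtFilter_rpow_nhdsGT_zero_iff.1 hint]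

theorem mellinConvergent_iff_of_isTheta_rpow (hfc : LocallyIntegrableOn f (Ioi 0))
    (htop : f =Θ[atTop] (· ^ (-a))) (hbot : f =Θ[𝓝[>] 0] (· ^ (-b))) :
    MellinConvergent f s ↔ b < s.re ∧ s.re < a :=
  ⟨fun h => ⟨lt_re_of_mellinConvergent_of_rpow_isBigO h hbot.2,
      re_lt_of_mellinConvergent_of_rpow_isBigO h htop.2⟩,
    fun ⟨hb, ha⟩ => mellinConvergent_of_isBigO_rpow hfc htop.1 ha hbot.1 hb⟩

end Mellin

lemma cosh_le_exp {x : ℝ} (hx : 0 ≤ x) : cosh x ≤ exp x := by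
  linarith [cosh_add_sinh x, sinh_nonneg_iff.2 hx]

lemma exp_div_two_le_cosh (x : ℝ) : exp x / 2 ≤ cosh x := by
  linarith [cosh_eq x, exp_pos (-x)]

lemma prod_odd_div_even_eq_factorial (m : ℕ) :
    ∏ i ∈ Finset.range m, (2 * (i : ℝ) + 1) / (2 * i + 2) = (2 * m)! / (4 ^ m * (m ! : ℝ) ^ 2) := by
  induction m with
  | zero => simp
  | succ m ih =>
    rw [Finset.prod_range_succ, ih, mul_add_one 2 m, Nat.factorial_succ, Nat.factorial_succ,
      Nat.factorial_succ]
    push_cast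
    field_simp
    ring

lemma integral_cos_pow_even (m : ℕ) :
    ∫ θ in -(π / 2)..π / 2, cos θ ^ (2 * m) = π * ((2 * m)! / (4 ^ m * (m ! : ℝ) ^ 2)) := by
  have hshift := intervalIntegral.integral_comp_add_right
    (a := -(π / 2)) (b := π / 2) (fun θ => sin θ ^ (2 * m)) (π / 2)
  simp only [sin_add_pi_div_two, neg_add_cancel, add_halves] at hshift
  rw [hshift, integral_sin_pow_even, prod_odd_div_even_eq_factorial]

lemma hasSum_integral_cosh_mul_cos (z : ℝ) :
    HasSum (fun m : ℕ => ∫ θ in -(π / 2)..π / 2, (z * cos θ) ^ (2 * m) / (2 * m)!)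
      (∫ θ in -(π / 2)..π / 2, cosh (z * cos θ)) := by
  refine intervalIntegral.hasSum_integral_of_dominated_convergence
    (fun m _ => z ^ (2 * m) / (2 * m)!) (fun m => by fun_prop) (fun m => ?_)
    (.of_forall fun _ _ => (hasSum_cosh z).summable) intervalIntegrable_const
    (.of_forall fun θ _ => hasSum_cosh (z * cos θ))
  refine .of_forall fun θ _ => ?_
  rw [norm_of_nonneg (by simp only [pow_mul]; positivity), pow_mul, pow_mul]
  gcongr ?_ ^ m / _
  rw [mul_pow]
  exact mul_le_of_le_one_right (sq_nonneg z) (cos_sq_le_one θ)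

theorem integral_cosh_mul_cos (z : ℝ) :
    ∫ θ in -(π / 2)..π / 2, cosh (z * cos θ) = π * besselI0 z := by
  rw [← (hasSum_integral_cosh_mul_cos z).tsum_eq, besselI0, ← tsum_mul_left]
  refine tsum_congr fun m => ?_
  have hfour : (2 : ℝ) ^ (2 * m) = 4 ^ m := by norm_num [pow_mul]
  simp only [mul_pow, intervalIntegral.integral_div, intervalIntegral.integral_const_mul,
    integral_cos_pow_even, div_pow, hfour]
  field_simp

lemma continuous_besselI0 : Continuous besselI0 := by
  have hrepr : besselI0 = fun z => (∫ θ in -(π / 2)..π / 2, cosh (z * cos θ)) / π := by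
    ext z
    rw [integral_cosh_mul_cos, mul_div_cancel_left₀ _ pi_ne_zero]
  rw [hrepr]
  fun_prop

lemma besselI0_zero : besselI0 0 = 1 := by
  have h := integral_cosh_mul_cos 0
  simp only [zero_mul, cosh_zero, intervalIntegral.integral_const, sub_neg_eq_add, add_halves,
    smul_eq_mul] at h
  exact (mul_left_cancel₀ pi_ne_zero h).symm

section Growth

variable {z : ℝ}

lemma cosh_mul_cos_le {θ : ℝ} (hz : 0 ≤ z) (hθ : θ ∈ Icc (-(π / 2)) (π / 2)) :
    cosh (z * cos θ) ≤ exp z * exp (-(2 * z / π ^ 2) * θ ^ 2) := by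
  have hcos : cos θ ≤ 1 - 2 / π ^ 2 * θ ^ 2 :=
    cos_le_one_sub_mul_cos_sq (abs_le.2 ⟨by linarith [hθ.1, pi_pos], by linarith [hθ.2, pi_pos]⟩)
  calc cosh (z * cos θ) ≤ exp (z * cos θ) :=
        cosh_le_exp (mul_nonneg hz (cos_nonneg_of_mem_Icc hθ))
    _ ≤ exp (z * (1 - 2 / π ^ 2 * θ ^ 2)) := by gcongr
    _ = exp z * exp (-(2 * z / π ^ 2) * θ ^ 2) := by rw [← exp_add]; ring_nf

lemma le_cosh_mul_cos {θ : ℝ} (hz : 0 < z) (hθ : θ ∈ Icc (-(√z)⁻¹) (√z)⁻¹) :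
    exp (z - 1 / 2) / 2 ≤ cosh (z * cos θ) := by
  have hsq : z * θ ^ 2 ≤ 1 := by
    have := sq_le_sq' hθ.1 hθ.2
    rwa [inv_pow, sq_sqrt hz.le, ← one_div, le_div_iff₀' hz] at this
  calc exp (z - 1 / 2) / 2 ≤ exp (z * cos θ) / 2 := by
        gcongr
        nlinarith [one_sub_sq_div_two_le_cos (x := θ)]
    _ ≤ cosh (z * cos θ) := exp_div_two_le_cosh _

theorem besselI0_le (hz : 0 < z) : besselI0 z ≤ √(π / 2) * (exp z / √z) := by
  have hcont : Continuous fun θ => cosh (z * cos θ) := by fun_prop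
  have hint : Integrable fun θ : ℝ => exp z * exp (-(2 * z / π ^ 2) * θ ^ 2) :=
    (integrable_exp_neg_mul_sq (by positivity)).const_mul _
  have hle : -(π / 2) ≤ π / 2 := by linarith [pi_pos]
  have hgauss : √(π / (2 * z / π ^ 2)) = π * (√(π / 2) / √z) := by
    rw [show π / (2 * z / π ^ 2) = π ^ 2 * (π / 2 / z) by field_simp, sqrt_mul (sq_nonneg π),
      sqrt_sq pi_pos.le, sqrt_div' _ hz.le]
  refine le_of_mul_le_mul_left ?_ pi_pos
  calc π * besselI0 z = ∫ θ in -(π / 2)..π / 2, cosh (z * cos θ) :=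
        (integral_cosh_mul_cos z).symm
    _ ≤ ∫ θ in -(π / 2)..π / 2, exp z * exp (-(2 * z / π ^ 2) * θ ^ 2) :=
        intervalIntegral.integral_mono_on hle (hcont.intervalIntegrable _ _)
          hint.intervalIntegrable fun θ hθ => cosh_mul_cos_le hz.le hθ
    _ ≤ ∫ θ, exp z * exp (-(2 * z / π ^ 2) * θ ^ 2) := by
        rw [intervalIntegral.integral_of_le hle]
        exact setIntegral_le_integral hint (.of_forall fun θ => by positivity)
    _ = π * (√(π / 2) * (exp z / √z)) := by
        rw [integral_const_mul, integral_gaussian, hgauss]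
        ring

theorem le_besselI0 (hz : 1 ≤ z) : exp (-(1 / 2)) / π * (exp z / √z) ≤ besselI0 z := by
  have hz0 : 0 < z := by linarith
  have hinv : (√z)⁻¹ ≤ π / 2 :=
    (inv_le_one_of_one_le₀ (one_le_sqrt.2 hz)).trans (by linarith [two_le_pi])
  have hcont : Continuous fun θ => cosh (z * cos θ) := by fun_prop
  have hle : -(√z)⁻¹ ≤ (√z)⁻¹ := neg_le_self (by positivity)
  refine le_of_mul_le_mul_left ?_ pi_pos
  calc π * (exp (-(1 / 2)) / π * (exp z / √z))
      = ∫ _ in -(√z)⁻¹..(√z)⁻¹, exp (z - 1 / 2) / 2 := by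
        rw [intervalIntegral.integral_const, smul_eq_mul, sub_eq_add_neg z, exp_add]
        field_simp
        ring
    _ ≤ ∫ θ in -(√z)⁻¹..(√z)⁻¹, cosh (z * cos θ) :=
        intervalIntegral.integral_mono_on hle intervalIntegrable_const
          (hcont.intervalIntegrable _ _) fun θ hθ => le_cosh_mul_cos hz0 hθ
    _ ≤ ∫ θ in -(π / 2)..π / 2, cosh (z * cos θ) :=
        intervalIntegral.integral_mono_interval (neg_le_neg hinv) hle hinv
          (.of_forall fun θ => (cosh_pos _).le) (hcont.intervalIntegrable _ _)
    _ = π * besselI0 z := integral_cosh_mul_cos z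

theorem besselI0_isTheta_atTop : besselI0 =Θ[atTop] fun z => exp z / √z := by
  constructor
  · refine .of_bound (√(π / 2)) ((eventually_ge_atTop 1).mono fun z hz => ?_)
    have hpos : 0 ≤ besselI0 z := le_trans (by positivity) (le_besselI0 hz)
    rw [norm_of_nonneg hpos, norm_of_nonneg (by positivity)]
    exact besselI0_le (by linarith)
  · refine .of_bound (exp (-(1 / 2)) / π)⁻¹ ((eventually_ge_atTop 1).mono fun z hz => ?_)
    rw [norm_of_nonneg (by positivity), ← div_eq_inv_mul, le_div_iff₀' (by positivity)]
    exact (le_besselI0 hz).trans (le_abs_self _)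

lemma exp_neg_mul_besselI0_isTheta_atTop :
    (fun z => exp (-z) * besselI0 z) =Θ[atTop] (· ^ (-(1 / 2) : ℝ)) := by
  refine ((isTheta_refl (fun z => exp (-z)) atTop).mul besselI0_isTheta_atTop).trans_eventuallyEq ?_
  filter_upwards [eventually_gt_atTop 0] with z hz
  rw [rpow_neg hz.le, ← sqrt_eq_rpow, ← mul_div_assoc, ← exp_add, neg_add_cancel, exp_zero, one_div]

lemma continuous_exp_neg_mul_besselI0 : Continuous fun z => exp (-z) * besselI0 z := by
  have := continuous_besselI0
  fun_prop

lemma exp_neg_mul_besselI0_isTheta_nhds_zero :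
    (fun z => exp (-z) * besselI0 z) =Θ[𝓝 0] fun _ => (1 : ℝ) := by
  refine ((isEquivalent_const_iff_tendsto one_ne_zero).2 ?_).isTheta
  simpa [besselI0_zero] using continuous_exp_neg_mul_besselI0.tendsto 0

end Growth

theorem mellinConvergent_exp_neg_mul_besselI0_iff {s : ℂ} :
    MellinConvergent (fun z : ℝ => ((exp (-z) * besselI0 z : ℝ) : ℂ)) s ↔
      0 < s.re ∧ s.re < 1 / 2 := by
  refine mellinConvergent_iff_of_isTheta_rpow ?_ ?_ ?_
  · exact (Complex.continuous_ofReal.comp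
      continuous_exp_neg_mul_besselI0).locallyIntegrable.locallyIntegrableOn _
  · exact (Complex.isTheta_ofReal _ _).trans exp_neg_mul_besselI0_isTheta_atTop
  · simpa only [neg_zero, rpow_zero] using (Complex.isTheta_ofReal _ _).trans
      (exp_neg_mul_besselI0_isTheta_nhds_zero.mono nhdsWithin_le_nhds)

/-- The function `t ↦ e^{-2t} I₀(2t) t^{s-1}` is integrable on `(0, ∞)`
if and only if `0 < Re s < 1/2`. -/
theorem integrableOn_heatTrace_iff (s : ℂ) :
    IntegrableOn
        (fun t : ℝ => ((Real.exp (-2 * t) * besselI0 (2 * t) : ℝ) : ℂ) * (t : ℂ) ^ (s - 1))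
        (Set.Ioi (0 : ℝ)) ↔
      0 < s.re ∧ s.re < 1 / 2 := by
  rw [← mellinConvergent_exp_neg_mul_besselI0_iff,
    ← MellinConvergent.comp_mul_left (two_pos : (0 : ℝ) < 2), MellinConvergent]
  simp only [smul_eq_mul, neg_mul, mul_comm ((_ : ℂ) ^ (s - 1))]
end

section
/- There exists an entire function F : ℂ → ℂ such that F(s) = 2^s cos(πs/2) · 4^{-s/2} Γ((1−s)/2) / (√π · Γ(1 − s/2)) for every complex s that is not an odd positive integer; that is, the completed zeta function ξ_ℤ(s) = 2^s cos(πs/2) ζ_ℤ(s/2) extends to an entire function. -/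
open Real

/-!
Since `2 ^ s * 4 ^ (-s / 2) = 1`, the exponential factors of `ξ_ℤ` cancel. Euler's reflection
formula at `(1 - s) / 2` turns `cos (π s / 2) * Γ ((1 - s) / 2)` into `π / Γ ((1 + s) / 2)`, so
`ξ_ℤ(s) = √π / (Γ ((1 + s) / 2) * Γ (1 - s / 2))`, and `1 / Γ` is entire.
-/

theorem sin_pi_mul_mul_Gamma {z : ℂ} (hz : ∀ n : ℕ, z ≠ -n) :
    Complex.sin (π * z) * Complex.Gamma z = π * (Complex.Gamma (1 - z))⁻¹ := by
  have hΓ : Complex.Gamma z ≠ 0 := Complex.Gamma_ne_zero hz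
  have hπ : (π : ℂ) ≠ 0 := Complex.ofReal_ne_zero.mpr pi_ne_zero
  -- Inverting the reflection formula needs no case distinction on `sin (π * z) = 0`, as `0⁻¹ = 0`.
  have inv_reflection : (Complex.Gamma z)⁻¹ * (Complex.Gamma (1 - z))⁻¹ =
      Complex.sin (π * z) / π := by
    rw [← mul_inv, Complex.Gamma_mul_Gamma_one_sub, inv_div]
  calc Complex.sin (π * z) * Complex.Gamma z
      = π * (Complex.Gamma z * (Complex.sin (π * z) / π)) := by field_simp
    _ = π * (Complex.Gamma (1 - z))⁻¹ := by
      rw [← inv_reflection, mul_inv_cancel_left₀ hΓ]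

theorem cos_pi_mul_div_two_mul_Gamma {s : ℂ} (hs : ∀ n : ℕ, s ≠ 2 * n + 1) :
    Complex.cos (π * s / 2) * Complex.Gamma ((1 - s) / 2) =
      π * (Complex.Gamma ((1 + s) / 2))⁻¹ := by
  have hz (n : ℕ) : (1 - s) / 2 ≠ -n := fun h => hs n (by linear_combination (-2 : ℂ) * h)
  have hcos : Complex.sin (π * ((1 - s) / 2)) = Complex.cos (π * s / 2) := by
    rw [← Complex.sin_pi_div_two_sub]
    ring_nf
  rw [← hcos, sin_pi_mul_mul_Gamma hz]
  ring_nf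

theorem sq_cpow_neg_div_two {z : ℂ} (hlt : -π < 2 * z.arg) (hle : 2 * z.arg ≤ π) (s : ℂ) :
    (z ^ 2) ^ (-(s / 2)) = (z ^ s)⁻¹ := by
  rw [← Complex.cpow_ofNat_mul' hlt hle, mul_neg, mul_div_cancel₀ s two_ne_zero, Complex.cpow_neg]

theorem two_cpow_mul_four_cpow_neg_div_two (s : ℂ) :
    (2 : ℂ) ^ s * (4 : ℂ) ^ (-(s / 2)) = 1 := by
  have four_cpow : (4 : ℂ) ^ (-(s / 2)) = ((2 : ℂ) ^ s)⁻¹ := by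
    rw [show (4 : ℂ) = 2 ^ 2 by norm_num]
    exact sq_cpow_neg_div_two (by simp [pi_pos]) (by simp [pi_nonneg]) s
  rw [four_cpow]
  exact mul_inv_cancel₀ (by simp [Complex.cpow_eq_zero_iff])

/-- The entire continuation of the completed spectral zeta function `ξ_ℤ`, written with inverses of
Gamma values: Mathlib's `Γ` is `0` at its poles, so its inverse there is the value `0` of the entire
function `1 / Γ`. -/
noncomputable def entireXiZ (s : ℂ) : ℂ :=
  (√π : ℂ) * (Complex.Gamma ((1 + s) / 2))⁻¹ * (Complex.Gamma (1 - s / 2))⁻¹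

theorem differentiable_entireXiZ : Differentiable ℂ entireXiZ := by
  have hleft : Differentiable ℂ fun s : ℂ => (Complex.Gamma ((1 + s) / 2))⁻¹ :=
    Complex.differentiable_one_div_Gamma.comp (f := fun s : ℂ => (1 + s) / 2) (by fun_prop)
  have hright : Differentiable ℂ fun s : ℂ => (Complex.Gamma (1 - s / 2))⁻¹ :=
    Complex.differentiable_one_div_Gamma.comp (f := fun s : ℂ => 1 - s / 2) (by fun_prop)
  exact (hleft.const_mul _).mul hright

/-- The completed spectral zeta function `ξ_ℤ(s) = 2^s cos(πs/2) ζ_ℤ(s/2)`, where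
`ζ_ℤ(s) = 4^{-s} Γ(1/2 − s) / (√π Γ(1 − s))`, extends to an entire function: there is an
entire `F : ℂ → ℂ` agreeing with `2^s cos(πs/2) 4^{-s/2} Γ((1−s)/2) / (√π Γ(1 − s/2))`
at every `s` which is not an odd positive integer. -/
theorem xiZ_extends_to_entire :
    ∃ F : ℂ → ℂ, Differentiable ℂ F ∧
      ∀ s : ℂ, (∀ n : ℕ, s ≠ 2 * n + 1) →
        F s = (2 : ℂ) ^ s * Complex.cos (π * s / 2) * (4 : ℂ) ^ (-(s / 2)) *
          Complex.Gamma ((1 - s) / 2) / ((Real.sqrt π : ℂ) * Complex.Gamma (1 - s / 2)) := by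
  refine ⟨entireXiZ, differentiable_entireXiZ, fun s hs => ?_⟩
  have hsqrt : (√π : ℂ) = π * (√π : ℂ)⁻¹ := by
    rw [← div_eq_mul_inv, ← Complex.ofReal_div, Real.div_sqrt]
  symm
  calc (2 : ℂ) ^ s * Complex.cos (π * s / 2) * (4 : ℂ) ^ (-(s / 2)) *
          Complex.Gamma ((1 - s) / 2) / ((√π : ℂ) * Complex.Gamma (1 - s / 2))
      = ((2 : ℂ) ^ s * (4 : ℂ) ^ (-(s / 2))) *
          (Complex.cos (π * s / 2) * Complex.Gamma ((1 - s) / 2)) *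
          ((√π : ℂ)⁻¹ * (Complex.Gamma (1 - s / 2))⁻¹) := by
        rw [div_eq_mul_inv, mul_inv]
        ring
    _ = π * (Complex.Gamma ((1 + s) / 2))⁻¹ *
          ((√π : ℂ)⁻¹ * (Complex.Gamma (1 - s / 2))⁻¹) := by
        rw [two_cpow_mul_four_cpow_neg_div_two, one_mul, cos_pi_mul_div_two_mul_Gamma hs]
    _ = entireXiZ s := by
        rw [entireXiZ]
        linear_combination
          -(Complex.Gamma ((1 + s) / 2))⁻¹ * (Complex.Gamma (1 - s / 2))⁻¹ * hsqrt
end
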